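/- Let n ≥ 2 and let θ ∈ (0, π/2). Then the cone 𝒪_θ ⊆ ℝⁿ does not have the backward uniqueness property, even for the pure heat equation: there exists a bounded smooth function u on 𝒪_θ × (0,1), not identically zero, satisfying ∂ₜu = Δu on 𝒪_θ × (0,1) and u(x,1) = 0 for every x ∈ 𝒪_θ (in the sense of continuous extension as t → 1⁻). -/

import Mathlib

open Real Set Filter

/-- The Laplacian of `f` at `x`, computed as the sum of the second partial
derivatives in the coordinate directions. -/
noncomputable def lap {n : ℕ} (f : EuclideanSpace ℝ (Fin n) → ℝ)
    (x : EuclideanSpace ℝ (Fin n)) : ℝ :=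
  ∑ i, fderiv ℝ (fun y => fderiv ℝ f y (EuclideanSpace.single i 1)) x
      (EuclideanSpace.single i 1)

/-- The open cone `𝒪_θ = {x : x₁ > |x| cos (θ/2)}` in `ℝⁿ`. -/
def cone (n : ℕ) [NeZero n] (θ : ℝ) : Set (EuclideanSpace ℝ (Fin n)) :=
  {x | ‖x‖ * Real.cos (θ / 2) < x 0}

open ComplexConjugate in
/-- The Appell transform of a function `F` of one complex variable: it turns holomorphic
functions into solutions of the backward heat equation in the plane. -/
noncomputable def appell (F : ℂ → ℂ) (z : ℂ) (s : ℝ) : ℂ :=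
  (s : ℂ)⁻¹ * Complex.exp (z * conj z / (4 * s)) * F (z / s)

open ComplexConjugate in
lemma hasDerivAt_appell_curve {F : ℂ → ℂ} {F' w : ℂ} {s t : ℝ} {z : ℝ → ℂ}
    (hF : HasDerivAt F F' (z t / s)) (hz : HasDerivAt z w t) :
    HasDerivAt (fun τ => appell F (z τ) s)
      (appell F (z t) s * ((z t * conj w + w * conj (z t)) / (4 * s))
        + (s : ℂ)⁻¹ * Complex.exp (z t * conj (z t) / (4 * s)) * (F' * (w / s))) t := by
  have hc : HasDerivAt (fun τ => conj (z τ)) (conj w) t :=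
    (Complex.conjCLE.toContinuousLinearMap.hasFDerivAt (x := z t)).comp_hasDerivAt t hz
  have h1 := ((hz.mul hc).div_const (4 * (s : ℂ))).cexp
  have h2 : HasDerivAt (fun τ => F (z τ / s)) (F' * (w / s)) t :=
    hF.comp t (hz.div_const (s : ℂ))
  have h3 := (h1.const_mul (s : ℂ)⁻¹).mul h2
  refine h3.congr_deriv ?_
  simp only [appell, Pi.mul_apply]
  ring

open ComplexConjugate in
lemma hasDerivAt_appell_time {F : ℂ → ℂ} {F' z : ℂ} {s : ℝ} (hs : s ≠ 0)
    (hF : HasDerivAt F F' (z / s)) :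
    HasDerivAt (fun σ => appell F z σ)
      (-(appell F z s * ((s : ℂ)⁻¹ + z * conj z / (4 * s ^ 2))
        + (s : ℂ)⁻¹ * Complex.exp (z * conj z / (4 * s)) * (F' * (z / s ^ 2)))) s := by
  have hs' : (s : ℂ) ≠ 0 := by exact_mod_cast hs
  have h0 : HasDerivAt (fun σ : ℝ => (σ : ℂ)⁻¹) (-1 / (s : ℂ) ^ 2) s :=
    (Complex.ofRealCLM.hasDerivAt (x := s)).inv hs'
  have h1 : HasDerivAt (fun σ : ℝ => z * conj z / (4 * (σ : ℂ)))
      (z * conj z / 4 * (-1 / (s : ℂ) ^ 2)) s := by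
    refine (h0.const_mul (z * conj z / 4)).congr_of_eventuallyEq (.of_forall fun σ => ?_)
    simp only [div_eq_mul_inv, mul_inv]; ring
  have h2 : HasDerivAt (fun σ : ℝ => F (z / σ)) (F' * (z * (-1 / (s : ℂ) ^ 2))) s :=
    hF.comp s (h0.const_mul z)
  have h3 := (h0.mul h1.cexp).mul h2
  refine h3.congr_deriv ?_
  simp only [appell, Pi.mul_apply]
  field_simp
  ring

/-- Second derivative of a function along a line, in terms of iterated Fréchet derivatives. -/
lemma fderiv_fderiv_eq_of_line {E : Type*} [NormedAddCommGroup E] [NormedSpace ℝ E]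
    {f : E → ℝ} {x v : E} {g : ℝ → ℝ} {d : ℝ} (hf : ContDiffAt ℝ 2 f x)
    (hg : ∀ᶠ t in nhds (0 : ℝ), HasDerivAt (fun τ : ℝ => f (x + τ • v)) (g t) t)
    (hd : HasDerivAt g d 0) :
    fderiv ℝ (fun y => fderiv ℝ f y v) x v = d := by
  have hline : ∀ t : ℝ, HasDerivAt (fun τ : ℝ => x + τ • v) v t := fun t => by
    simpa using ((hasDerivAt_id t).smul_const v).const_add x
  have hx0 : x + (0 : ℝ) • v = x := by simp
  have h1 : DifferentiableAt ℝ (fun y => fderiv ℝ f y v) x :=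
    ((hf.fderiv_right (m := 1) (by norm_num)).differentiableAt (by norm_num)).clm_apply
      (differentiableAt_const v)
  have h2 : HasDerivAt (fun t : ℝ => fderiv ℝ f (x + t • v) v)
      (fderiv ℝ (fun y => fderiv ℝ f y v) x v) 0 := by
    have := h1.hasFDerivAt
    rw [← hx0] at this
    have := this.comp_hasDerivAt (0 : ℝ) (hline 0)
    rwa [hx0] at this
  have hdiff : ∀ᶠ y in nhds x, DifferentiableAt ℝ f y :=
    (hf.eventually (by simp)).mono fun y hy => hy.differentiableAt (by norm_num)
  have hcont : Tendsto (fun t : ℝ => x + t • v) (nhds 0) (nhds x) := by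
    simpa [hx0] using (hline 0).continuousAt.tendsto
  have h3 : (fun t : ℝ => fderiv ℝ f (x + t • v) v) =ᶠ[nhds 0] g := by
    filter_upwards [hcont.eventually hdiff, hg] with t ht hgt
    exact (ht.hasFDerivAt.comp_hasDerivAt t (hline t)).unique hgt
  exact (h2.congr_of_eventuallyEq h3.symm).unique hd

/-- The map `x ↦ x₀ + i xⱼ` from `ℝⁿ` to `ℂ`. -/
noncomputable def toPlane {n : ℕ} [NeZero n] (j : Fin n) : EuclideanSpace ℝ (Fin n) →L[ℝ] ℂ :=
  Complex.ofRealCLM.comp (EuclideanSpace.proj 0)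
    + Complex.I • Complex.ofRealCLM.comp (EuclideanSpace.proj j)

lemma toPlane_apply {n : ℕ} [NeZero n] (j : Fin n) (x : EuclideanSpace ℝ (Fin n)) :
    toPlane j x = x 0 + Complex.I * x j := by
  simp [toPlane]

lemma contDiffOn_appell {F : ℂ → ℂ} {U : Set ℂ} (hU : IsOpen U) (hF : DifferentiableOn ℂ F U)
    {n : ℕ} [NeZero n] (j : Fin n) {S : Set (EuclideanSpace ℝ (Fin n) × ℝ)}
    (hS : ∀ p ∈ S, p.2 < 1 ∧ (toPlane j p.1 + 1) / ((1 - p.2 : ℝ) : ℂ) ∈ U) :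
    ContDiffOn ℝ (⊤ : ℕ∞) (fun p : EuclideanSpace ℝ (Fin n) × ℝ =>
      (appell F (toPlane j p.1 + 1) (1 - p.2)).re) S := by
  have hs : ContDiff ℝ (⊤ : ℕ∞)
      (fun p : EuclideanSpace ℝ (Fin n) × ℝ => ((1 - p.2 : ℝ) : ℂ)) :=
    Complex.ofRealCLM.contDiff.comp (contDiff_const.sub contDiff_snd)
  have hz : ContDiff ℝ (⊤ : ℕ∞)
      (fun p : EuclideanSpace ℝ (Fin n) × ℝ => toPlane j p.1 + 1) :=
    ((toPlane j).contDiff.comp contDiff_fst).add contDiff_const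
  have hzc : ContDiff ℝ (⊤ : ℕ∞)
      (fun p : EuclideanSpace ℝ (Fin n) × ℝ => (starRingEnd ℂ) (toPlane j p.1 + 1)) :=
    Complex.conjCLE.toContinuousLinearMap.contDiff.comp hz
  have hne : ∀ p ∈ S, ((1 - p.2 : ℝ) : ℂ) ≠ 0 := fun p hp => by
    exact_mod_cast (sub_pos.2 (hS p hp).1).ne'
  have hinv := hs.contDiffOn.inv hne
  have hdiv : ContDiffOn ℝ (⊤ : ℕ∞) (fun p : EuclideanSpace ℝ (Fin n) × ℝ =>
      (toPlane j p.1 + 1) / ((1 - p.2 : ℝ) : ℂ)) S := by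
    simp only [div_eq_mul_inv]
    exact hz.contDiffOn.mul hinv
  have hFc : ContDiffOn ℝ (⊤ : ℕ∞) F U := (hF.contDiffOn hU).restrict_scalars ℝ
  have hexp : ContDiffOn ℝ (⊤ : ℕ∞) (fun p : EuclideanSpace ℝ (Fin n) × ℝ =>
      (toPlane j p.1 + 1) * (starRingEnd ℂ) (toPlane j p.1 + 1)
        / (4 * ((1 - p.2 : ℝ) : ℂ))) S := by
    simp only [div_eq_mul_inv, mul_inv]
    exact (hz.mul hzc).contDiffOn.mul (contDiffOn_const.mul hinv)
  exact Complex.reCLM.contDiff.comp_contDiffOn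
    ((hinv.mul hexp.cexp).mul (hFc.comp hdiv fun p hp => (hS p hp).2))

open ComplexConjugate in
lemma fderiv_fderiv_appell {F : ℂ → ℂ} {U : Set ℂ} (hU : IsOpen U) (hF : DifferentiableOn ℂ F U)
    {E : Type*} [NormedAddCommGroup E] [NormedSpace ℝ E] (L : E →L[ℝ] ℂ) (x v : E) {s : ℝ}
    (hx : (L x + 1) / (s : ℂ) ∈ U)
    (hf : ContDiffAt ℝ 2 (fun y => (appell F (L y + 1) s).re) x) :
    fderiv ℝ (fun y => fderiv ℝ (fun y => (appell F (L y + 1) s).re) y v) x v =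
      (appell F (L x + 1) s * (((L x + 1) * conj (L v) + L v * conj (L x + 1)) / (4 * s)) ^ 2
        + 2 * (((L x + 1) * conj (L v) + L v * conj (L x + 1)) / (4 * s)) * (L v / s)
          * appell (deriv F) (L x + 1) s
        + appell F (L x + 1) s * (2 * (L v * conj (L v)) / (4 * s))
        + (L v / s) ^ 2 * appell (deriv (deriv F)) (L x + 1) s).re := by
  have hF2 : DifferentiableOn ℂ (deriv F) U := hF.deriv hU
  have hz : ∀ t : ℝ, HasDerivAt (fun τ : ℝ => L (x + τ • v) + 1) (L v) t := fun t => by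
    have h : HasDerivAt (fun τ : ℝ => x + τ • v) v t := by
      simpa using ((hasDerivAt_id t).smul_const v).const_add x
    exact (L.hasFDerivAt.comp_hasDerivAt t h).add_const 1
  have hzc : HasDerivAt (fun τ : ℝ => conj (L (x + τ • v) + 1)) (conj (L v)) 0 :=
    Complex.conjCLE.toContinuousLinearMap.hasFDerivAt.comp_hasDerivAt (0 : ℝ) (hz 0)
  have hre : ∀ {h : ℝ → ℂ} {h' : ℂ} {t : ℝ}, HasDerivAt h h' t →
      HasDerivAt (fun τ => (h τ).re) h'.re t := fun {h h' t} hh =>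
    (Complex.reCLM.hasFDerivAt (x := h t)).comp_hasDerivAt t hh
  have hev : ∀ᶠ t in nhds (0 : ℝ), (L (x + t • v) + 1) / (s : ℂ) ∈ U := by
    refine ((hz 0).div_const (s : ℂ)).continuousAt.eventually_mem (hU.mem_nhds ?_)
    simpa using hx
  refine fderiv_fderiv_eq_of_line (g := fun t =>
    (appell F (L (x + t • v) + 1) s *
        (((L (x + t • v) + 1) * conj (L v) + L v * conj (L (x + t • v) + 1)) / (4 * s))
      + appell (deriv F) (L (x + t • v) + 1) s * (L v / s)).re) hf ?_ ?_
  · filter_upwards [hev] with t ht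
    refine hre ((hasDerivAt_appell_curve (z := fun τ : ℝ => L (x + τ • v) + 1)
      ((hF.differentiableAt (hU.mem_nhds ht)).hasDerivAt) (hz t)).congr_deriv ?_)
    simp only [appell]; ring
  · have h1 := hasDerivAt_appell_curve (z := fun τ : ℝ => L (x + τ • v) + 1) (t := 0)
      ((hF.differentiableAt (hU.mem_nhds hev.self_of_nhds)).hasDerivAt) (hz 0)
    have h2 := hasDerivAt_appell_curve (z := fun τ : ℝ => L (x + τ • v) + 1) (t := 0)
      ((hF2.differentiableAt (hU.mem_nhds hev.self_of_nhds)).hasDerivAt) (hz 0)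
    have h3 := (((hz 0).mul_const (conj (L v))).add (hzc.const_mul (L v))).div_const (4 * (s : ℂ))
    refine (hre ((h1.mul h3).add (h2.mul_const (L v / s)))).congr_deriv ?_
    congr 1
    simp only [appell, Pi.add_apply, zero_smul, add_zero]
    ring

open ComplexConjugate in
/-- The time-reversed Appell transform of a holomorphic function of `x₀ + 1 + i xⱼ` solves
the heat equation. -/
lemma deriv_eq_lap_appell {F : ℂ → ℂ} {U : Set ℂ} (hU : IsOpen U) (hF : DifferentiableOn ℂ F U)
    {n : ℕ} [NeZero n] {j : Fin n} (hj : j ≠ 0) {x : EuclideanSpace ℝ (Fin n)} {t : ℝ}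
    (ht : t < 1) (hx : (toPlane j x + 1) / ((1 - t : ℝ) : ℂ) ∈ U)
    (hf : ContDiffAt ℝ 2 (fun y => (appell F (toPlane j y + 1) (1 - t)).re) x) :
    deriv (fun τ => (appell F (toPlane j x + 1) (1 - τ)).re) t =
      lap (fun y => (appell F (toPlane j y + 1) (1 - t)).re) x := by
  have hs : (1 - t) ≠ 0 := (sub_pos.2 ht).ne'
  have hs' : ((1 - t : ℝ) : ℂ) ≠ 0 := by exact_mod_cast hs
  have h1 := hasDerivAt_appell_time hs (hF.differentiableAt (hU.mem_nhds hx)).hasDerivAt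
  have h2 := h1.scomp t ((hasDerivAt_id t).const_sub 1)
  have h3 := (Complex.reCLM.hasFDerivAt
    (x := appell F (toPlane j x + 1) (1 - t))).comp_hasDerivAt t h2
  refine h3.deriv.trans ?_
  unfold lap
  simp only [fderiv_fderiv_appell hU hF (toPlane j) x _ hx hf]
  rw [Finset.sum_eq_add 0 j hj.symm]
  · rw [← Complex.add_re, Complex.reCLM_apply]
    congr 1
    simp only [toPlane_apply, appell, PiLp.single_apply, if_pos, if_neg hj, if_neg hj.symm]
    set z : ℂ := (x 0 : ℂ) + Complex.I * x j + 1
    simp only [Complex.ofReal_one, Complex.ofReal_zero, mul_zero, mul_one, add_zero, zero_add,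
      map_one, Complex.conj_I, neg_smul, one_smul]
    field_simp
    ring_nf
    simp only [Complex.I_sq]
    ring
  · intro i _ hi
    have : toPlane j (EuclideanSpace.single i (1 : ℝ)) = 0 := by
      simp [toPlane_apply, hi.1.symm, hi.2.symm]
    simp [this]
  · simp
  · simp

lemma norm_appell_exp_cpow {z : ℂ} {s α : ℝ} (hs : 0 < s) :
    ‖appell (fun ζ => Complex.exp (-ζ ^ (α : ℂ))) z s‖ =
      s⁻¹ * Real.exp (‖z‖ ^ 2 / (4 * s)
        - (‖z‖ / s) ^ α * Real.cos (Complex.arg (z / s) * α)) := by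
  have h : z * (starRingEnd ℂ) z / (4 * (s : ℂ)) = ((‖z‖ ^ 2 / (4 * s) : ℝ) : ℂ) := by
    rw [Complex.mul_conj, Complex.normSq_eq_norm_sq]; push_cast; rfl
  rw [appell, norm_mul, norm_mul, norm_inv, Complex.norm_real, Complex.norm_exp, Complex.norm_exp,
    h, Complex.ofReal_re, Complex.neg_re, Complex.cpow_ofReal_re, norm_div, Complex.norm_real,
    Real.norm_of_nonneg hs.le, mul_assoc, ← Real.exp_add, sub_eq_add_neg]

/-- The majorant of the Appell transform of `exp (-z ^ α)` on a sector. -/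
noncomputable def majorant (c α r : ℝ) : ℝ := r * Real.exp (r ^ 2 / 4 - c * r ^ α)

lemma norm_appell_le {z : ℂ} {s α c : ℝ} (hs : 0 < s) (hs1 : s < 1) (hz : 1 ≤ ‖z‖)
    (hc : c ≤ Real.cos (Complex.arg (z / s) * α)) :
    ‖appell (fun ζ => Complex.exp (-ζ ^ (α : ℂ))) z s‖ ≤ majorant c α (‖z‖ / s) := by
  rw [norm_appell_exp_cpow hs, majorant]
  have hr : 0 < ‖z‖ / s := by positivity
  have h1 : s⁻¹ ≤ ‖z‖ / s := by
    rw [inv_eq_one_div]; gcongr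
  have h2 : ‖z‖ ^ 2 / (4 * s) ≤ (‖z‖ / s) ^ 2 / 4 := by
    rw [div_pow, div_div]
    have : s ^ 2 * 4 ≤ 4 * s := by nlinarith
    gcongr
  have h3 : c * (‖z‖ / s) ^ α ≤ (‖z‖ / s) ^ α * Real.cos (Complex.arg (z / s) * α) := by
    rw [mul_comm]; gcongr
  gcongr

lemma tendsto_majorant {c α : ℝ} (hc : 0 < c) (hα : 2 < α) :
    Tendsto (majorant c α) atTop (nhds 0) := by
  have h0 : Tendsto (fun r : ℝ => r * Real.exp (-r)) atTop (nhds 0) := by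
    simpa using Real.tendsto_pow_mul_exp_neg_atTop_nhds_zero 1
  have h1 : ∀ᶠ r : ℝ in atTop, 2 / c ≤ r ^ (α - 2) :=
    (tendsto_rpow_atTop (sub_pos.2 hα)).eventually_ge_atTop _
  refine squeeze_zero' ?_ ?_ h0
  · filter_upwards [eventually_ge_atTop 0] with r hr
    exact mul_nonneg hr (Real.exp_pos _).le
  · filter_upwards [h1, eventually_ge_atTop 1] with r hr hr1
    have hr0 : 0 < r := by linarith
    have h2 : r ^ α = r ^ (α - 2) * r ^ 2 := by
      rw [← Real.rpow_natCast r 2, ← Real.rpow_add hr0]; norm_num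
    have h3 : 2 * r ^ 2 ≤ c * r ^ α := by
      rw [h2, ← mul_assoc]
      gcongr
      rwa [div_le_iff₀' hc] at hr
    unfold majorant
    gcongr
    nlinarith

lemma bddAbove_majorant {c α : ℝ} (hc : 0 < c) (hα : 2 < α) :
    ∃ M, ∀ r, 0 ≤ r → majorant c α r ≤ M := by
  obtain ⟨R, hR⟩ := eventually_atTop.1
    ((tendsto_majorant hc hα).eventually (eventually_le_nhds zero_lt_one))
  have hcont : Continuous (majorant c α) := by
    unfold majorant
    have : Continuous fun r : ℝ => r ^ α := Real.continuous_rpow_const (by linarith)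
    fun_prop
  obtain ⟨B, hB⟩ := (isCompact_Icc (a := (0 : ℝ)) (b := R)).bddAbove_image hcont.continuousOn
  refine ⟨max 1 B, fun r hr => ?_⟩
  rcases le_total R r with h | h
  · exact (hR r h).trans (le_max_left _ _)
  · exact (hB ⟨r, ⟨hr, h⟩, rfl⟩).trans (le_max_right _ _)

lemma isOpen_cone (n : ℕ) [NeZero n] (θ : ℝ) : IsOpen (cone n θ) :=
  isOpen_lt (by fun_prop) (by fun_prop)

lemma one_le_re_and_cos_lt_of_mem_cone {n : ℕ} [NeZero n] {θ : ℝ} (hcos : 0 < Real.cos (θ / 2))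
    {j : Fin n} (hj : j ≠ 0) {x : EuclideanSpace ℝ (Fin n)} (hx : x ∈ cone n θ) :
    1 ≤ (toPlane j x + 1).re ∧
      ‖toPlane j x + 1‖ * Real.cos (θ / 2) < (toPlane j x + 1).re := by
  have hx' : ‖x‖ * Real.cos (θ / 2) < x 0 := hx
  have hre : (toPlane j x).re = x 0 := by simp [toPlane_apply]
  have him : (toPlane j x).im = x j := by simp [toPlane_apply]
  have hnorm : ‖toPlane j x‖ ≤ ‖x‖ := by
    refine le_of_sq_le_sq ?_ (norm_nonneg x)
    rw [← Complex.normSq_eq_norm_sq, Complex.normSq_apply, hre, him, EuclideanSpace.norm_sq_eq]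
    have := Finset.sum_le_sum_of_subset_of_nonneg (Finset.subset_univ {0, j})
      (f := fun i => ‖x i‖ ^ 2) (fun i _ _ => sq_nonneg _)
    rw [Finset.sum_pair hj.symm] at this
    simpa [← sq] using this
  have h1 : ‖toPlane j x + 1‖ ≤ ‖x‖ + 1 := by
    simpa using (norm_add_le (toPlane j x) 1).trans (by simpa using hnorm)
  have hx0 : 0 ≤ ‖x‖ * Real.cos (θ / 2) := by positivity
  rw [Complex.add_re, hre, Complex.one_re]
  refine ⟨by linarith, ?_⟩
  nlinarith [Real.cos_le_one (θ / 2)]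

lemma abs_arg_lt_of_norm_mul_cos_lt {z : ℂ} {φ : ℝ} (hφ : 0 ≤ φ)
    (h : ‖z‖ * Real.cos φ < z.re) : |Complex.arg z| < φ := by
  have hz : 0 < ‖z‖ := by
    refine norm_pos_iff.2 fun hz => ?_
    simp [hz] at h
  by_contra! hcon
  have h1 := Real.cos_le_cos_of_nonneg_of_le_pi hφ (Complex.abs_arg_le_pi z) hcon
  rw [Real.cos_abs, Complex.cos_arg (norm_pos_iff.1 hz), div_le_iff₀ hz] at h1
  linarith

/-- Escauriaza's counterexample: for `θ < π/2`, the cone `𝒪_θ` fails backward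
uniqueness even for the pure heat equation -- there is a bounded smooth
nontrivial caloric function on `𝒪_θ × (0,1)` vanishing (in the sense of
continuous extension) at time `1`. -/
theorem cone_not_BU (n : ℕ) [NeZero n] (hn : 2 ≤ n) (θ : ℝ)
    (hθ0 : 0 < θ) (hθ : θ < π / 2) :
    ∃ u : EuclideanSpace ℝ (Fin n) → ℝ → ℝ,
      ContDiffOn ℝ (⊤ : ℕ∞) (fun p : EuclideanSpace ℝ (Fin n) × ℝ => u p.1 p.2)
        (cone n θ ×ˢ Set.Ioo 0 1) ∧
      (∃ M : ℝ, ∀ x ∈ cone n θ, ∀ t ∈ Set.Ioo (0 : ℝ) 1, |u x t| ≤ M) ∧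
      (∃ x ∈ cone n θ, ∃ t ∈ Set.Ioo (0 : ℝ) 1, u x t ≠ 0) ∧
      (∀ x ∈ cone n θ, ∀ t ∈ Set.Ioo (0 : ℝ) 1,
        deriv (u x) t = lap (fun y => u y t) x) ∧
      (∀ x ∈ cone n θ, Filter.Tendsto (u x) (nhdsWithin 1 (Set.Iio 1)) (nhds 0)) := by
  have hπ := Real.pi_pos
  have hcos : 0 < Real.cos (θ / 2) := Real.cos_pos_of_mem_Ioo ⟨by linarith, by linarith⟩
  obtain ⟨j, hj⟩ : ∃ j : Fin n, j ≠ 0 :=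
    ⟨⟨1, hn⟩, fun h => by simpa using congrArg Fin.val h⟩
  set α : ℝ := 1 + π / (2 * θ) with hα_def
  have hα : 2 < α := by
    have : 1 < π / (2 * θ) := by rw [lt_div_iff₀ (by positivity)]; linarith
    linarith
  have hαθ : θ / 2 * α = θ / 2 + π / 4 := by
    rw [hα_def]; field_simp; ring
  set c : ℝ := Real.cos (θ / 2 * α) with hc_def
  have hc : 0 < c := by
    rw [hc_def, hαθ]; exact Real.cos_pos_of_mem_Ioo ⟨by linarith, by linarith⟩
  set F : ℂ → ℂ := fun ζ => Complex.exp (-ζ ^ (α : ℂ)) with hF_def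
  have hF : DifferentiableOn ℂ F Complex.slitPlane := fun ζ hζ =>
    ((differentiableAt_id.cpow_const hζ).neg.cexp).differentiableWithinAt
  have hU := Complex.isOpen_slitPlane
  have hmem : ∀ x ∈ cone n θ, ∀ t < 1,
      (toPlane j x + 1) / ((1 - t : ℝ) : ℂ) ∈ Complex.slitPlane := fun x hx t ht => by
    refine Or.inl ?_
    rw [Complex.div_ofReal_re]
    exact div_pos (by linarith [(one_le_re_and_cos_lt_of_mem_cone hcos hj hx).1]) (by linarith)
  have hsmooth := contDiffOn_appell hU hF j (S := cone n θ ×ˢ Set.Ioo 0 1)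
    fun p hp => ⟨hp.2.2, hmem p.1 hp.1 p.2 hp.2.2⟩
  have hbound : ∀ x ∈ cone n θ, ∀ t ∈ Set.Ioo (0 : ℝ) 1,
      |(appell F (toPlane j x + 1) (1 - t)).re| ≤
        majorant c α (‖toPlane j x + 1‖ / (1 - t)) := fun x hx t ht => by
    obtain ⟨h1, h2⟩ := one_le_re_and_cos_lt_of_mem_cone hcos hj hx
    have hs : 0 < 1 - t := by linarith [ht.2]
    refine (Complex.abs_re_le_norm _).trans (norm_appell_le hs (by linarith [ht.1])
      (h1.trans (Complex.re_le_norm _)) ?_)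
    have harg := abs_arg_lt_of_norm_mul_cos_lt (by positivity) h2
    have hdiv : Complex.arg ((toPlane j x + 1) / ((1 - t : ℝ) : ℂ)) =
        Complex.arg (toPlane j x + 1) := by
      rw [div_eq_mul_inv, ← Complex.ofReal_inv, Complex.arg_mul_real (inv_pos.2 hs)]
    rw [hdiv, hc_def, ← Real.cos_abs (Complex.arg _ * α), abs_mul,
      abs_of_pos (by linarith : 0 < α)]
    refine Real.cos_le_cos_of_nonneg_of_le_pi (mul_nonneg (abs_nonneg _) (by linarith)) (by linarith) ?_
    gcongr
  refine ⟨fun x t => (appell F (toPlane j x + 1) (1 - t)).re, hsmooth, ?_, ?_, ?_, ?_⟩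
  · obtain ⟨M, hM⟩ := bddAbove_majorant hc hα
    exact ⟨M, fun x hx t ht => (hbound x hx t ht).trans
      (hM _ (div_nonneg (norm_nonneg _) (by linarith [ht.2])))⟩
  · refine ⟨EuclideanSpace.single 0 1, ?_, 1 / 2, by norm_num, ?_⟩
    · have : Real.cos (θ / 2) < 1 := by
        rw [← Real.cos_zero]
        exact Real.cos_lt_cos_of_nonneg_of_le_pi le_rfl (by linarith) (by linarith)
      simpa [cone] using this
    · have hz : toPlane j (EuclideanSpace.single 0 (1 : ℝ)) + 1 = ((2 : ℝ) : ℂ) := by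
        rw [toPlane_apply]; simp [hj]; norm_num
      have hval : appell F ((2 : ℝ) : ℂ) (1 - 1 / 2) =
          (((1 - 1 / 2 : ℝ)⁻¹ * Real.exp (2 * 2 / (4 * (1 - 1 / 2)))
            * Real.exp (-((2 : ℝ) / (1 - 1 / 2)) ^ α) : ℝ) : ℂ) := by
        simp only [appell, hF_def, Complex.conj_ofReal]
        rw [← Complex.ofReal_div, ← Complex.ofReal_cpow (by norm_num)]
        push_cast
        rfl
      simp only [hz, hval, Complex.ofReal_re]
      positivity
  · intro x hx t ht
    refine deriv_eq_lap_appell hU hF hj ht.2 (hmem x hx t ht.2) ?_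
    have h1 := hsmooth.contDiffAt (x := (x, t))
      (((isOpen_cone n θ).prod isOpen_Ioo).mem_nhds ⟨hx, ht⟩)
    have h2 : ContDiffAt ℝ (⊤ : ℕ∞) (fun y : EuclideanSpace ℝ (Fin n) => (y, t)) x :=
      contDiffAt_id.prodMk contDiffAt_const
    exact (h1.comp x h2).of_le (WithTop.coe_le_coe.2 le_top)
  · intro x hx
    have hz : 0 < ‖toPlane j x + 1‖ := by
      have := (one_le_re_and_cos_lt_of_mem_cone hcos hj hx).1
      exact (by linarith : (0 : ℝ) < (toPlane j x + 1).re).trans_le (Complex.re_le_norm _)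
    have hs : Tendsto (fun t : ℝ => 1 - t) (nhdsWithin 1 (Set.Iio 1))
        (nhdsWithin 0 (Set.Ioi 0)) := by
      refine tendsto_nhdsWithin_iff.2 ⟨?_, ?_⟩
      · have : Continuous fun t : ℝ => 1 - t := by fun_prop
        simpa using (this.tendsto 1).mono_left nhdsWithin_le_nhds
      · filter_upwards [self_mem_nhdsWithin] with t ht
        exact sub_pos.2 (Set.mem_Iio.1 ht)
    have hr : Tendsto (fun t : ℝ => ‖toPlane j x + 1‖ / (1 - t)) (nhdsWithin 1 (Set.Iio 1))
        atTop := by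
      simp only [div_eq_mul_inv]
      exact (tendsto_inv_nhdsGT_zero.comp hs).const_mul_atTop hz
    refine squeeze_zero_norm' ?_ ((tendsto_majorant hc hα).comp hr)
    filter_upwards [Ioo_mem_nhdsLT zero_lt_one] with t ht
    exact hbound x hx t ht
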